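/- There exists an absolute constant C > 0 such that for every ν ∈ (0,1] there exists a C^∞ function h₀ : ℝ → ℝ, 2π-periodic, with ∫_{−π}^{π} h₀(x) dx = 0, sup_{x ∈ ℝ} |h₀'(x)| ≤ 1, and E(h₀) ≤ C √ν, where E(h₀) = ∫_{−π}^{π} ( (ν/2) h₀''(x)² + ¼ (h₀'(x)² − 1)² ) dx. -/

import Mathlib

open Real MeasureTheory Set

noncomputable section

/-- The 1D slope-selection energy `E(h) = ∫_{−π}^{π} ((ν/2)h''² + ¼(h'²−1)²) dx`. -/
noncomputable def energy1D (ν : ℝ) (h : ℝ → ℝ) : ℝ :=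
  ∫ x in Icc (-Real.pi) Real.pi,
    ((ν / 2) * (deriv (deriv h) x) ^ 2 + (1 / 4) * ((deriv h x) ^ 2 - 1) ^ 2)

lemma aux_pos (ν : ℝ) (hν : 0 < ν) (x : ℝ) : 0 < ν + cos x ^ 2 := by positivity

lemma aux_d1 (ν : ℝ) (hν : 0 < ν) (x : ℝ) :
    HasDerivAt (fun x => arcsin (sin x / √(1 + ν))) (cos x / √(ν + cos x ^ 2)) x := by
  have hk : 0 < √(1 + ν) := Real.sqrt_pos.mpr (by linarith)
  have hk2 : √(1 + ν) ^ 2 = 1 + ν := Real.sq_sqrt (by linarith)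
  have hlt : |sin x / √(1 + ν)| < 1 := by
    rw [abs_div, abs_of_pos hk, div_lt_one hk]
    refine lt_of_le_of_lt (abs_sin_le_one x) ?_
    rw [Real.lt_sqrt (by norm_num)]; linarith
  rw [abs_lt] at hlt
  have h := (Real.hasDerivAt_arcsin (x := sin x / √(1 + ν)) (by linarith) (by linarith)).comp x
    ((Real.hasDerivAt_sin x).div_const (√(1 + ν)))
  refine h.congr_deriv (Eq.symm ?_)
  have : 1 - (sin x / √(1 + ν)) ^ 2 = (ν + cos x ^ 2) / (1 + ν) := by
    rw [div_pow, hk2, Real.cos_sq']; field_simp; ring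
  rw [this, Real.sqrt_div (aux_pos ν hν x).le]
  have := Real.sqrt_pos.mpr (aux_pos ν hν x)
  field_simp

lemma aux_d2 (ν : ℝ) (hν : 0 < ν) (x : ℝ) :
    HasDerivAt (fun x => cos x / √(ν + cos x ^ 2))
      (-(ν * sin x) / √(ν + cos x ^ 2) ^ 3) x := by
  have hD := aux_pos ν hν x
  have hu := Real.sqrt_pos.mpr hD
  have hu2 : √(ν + cos x ^ 2) ^ 2 = ν + cos x ^ 2 := Real.sq_sqrt hD.le
  have h := (Real.hasDerivAt_cos x).div
    ((((Real.hasDerivAt_cos x).pow 2).const_add ν).sqrt hD.ne') hu.ne'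
  refine h.congr_deriv ?_
  simp only [Pi.pow_apply]
  generalize √(ν + cos x ^ 2) = u at *
  field_simp
  rw [hu2]
  push_cast
  ring

lemma aux_G (ν : ℝ) (hν : 0 < ν) (x : ℝ) :
    HasDerivAt (fun x => -(√ν * arctan (cos x / √ν))) (ν * sin x / (ν + cos x ^ 2)) x := by
  have hs := Real.sqrt_pos.mpr hν
  have hs2 : √ν ^ 2 = ν := Real.sq_sqrt hν.le
  have hD := aux_pos ν hν x
  have h := ((((Real.hasDerivAt_cos x).div_const (√ν)).arctan).const_mul (√ν)).neg
  refine h.congr_deriv ?_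
  rw [div_pow, hs2]
  have : 1 + cos x ^ 2 / ν ≠ 0 := by positivity
  field_simp

lemma aux_int (ν : ℝ) (hν : 0 < ν) :
    ∫ x in (-π)..π, |ν * sin x / (ν + cos x ^ 2)| ≤ 2 * π * √ν := by
  have hc : Continuous (fun x => ν * sin x / (ν + cos x ^ 2)) :=
    (by fun_prop : Continuous fun x => ν * sin x).div (by fun_prop)
      (fun x => (aux_pos ν hν x).ne')
  have hs := Real.sqrt_pos.mpr hν
  have hca := hc.abs
  have hF : ∀ a b : ℝ, ∫ x in a..b, ν * sin x / (ν + cos x ^ 2) =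
      -(√ν * arctan (cos b / √ν)) - -(√ν * arctan (cos a / √ν)) := fun a b =>
    intervalIntegral.integral_eq_sub_of_hasDerivAt (fun x _ => aux_G ν hν x)
      (hc.intervalIntegrable _ _)
  rw [← intervalIntegral.integral_add_adjacent_intervals (b := 0)
    (hca.intervalIntegrable _ _) (hca.intervalIntegrable _ _)]
  have h1 : ∫ x in (-π)..0, |ν * sin x / (ν + cos x ^ 2)| =
      -∫ x in (-π)..0, ν * sin x / (ν + cos x ^ 2) := by
    rw [← intervalIntegral.integral_neg]
    apply intervalIntegral.integral_congr
    intro x hx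
    rw [uIcc_of_le (by linarith [pi_pos])] at hx
    apply abs_of_nonpos
    exact div_nonpos_of_nonpos_of_nonneg (mul_nonpos_of_nonneg_of_nonpos hν.le
      (Real.sin_nonpos_of_nonpos_of_neg_pi_le hx.2 hx.1)) (aux_pos ν hν x).le
  have h2 : ∫ x in (0)..π, |ν * sin x / (ν + cos x ^ 2)| =
      ∫ x in (0)..π, ν * sin x / (ν + cos x ^ 2) := by
    apply intervalIntegral.integral_congr
    intro x hx
    rw [uIcc_of_le (by linarith [pi_pos])] at hx
    apply abs_of_nonneg
    exact div_nonneg (mul_nonneg hν.le (Real.sin_nonneg_of_mem_Icc hx)) (aux_pos ν hν x).le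
  rw [h1, h2, hF, hF]
  simp only [cos_neg, cos_pi, cos_zero, neg_div, arctan_neg]
  nlinarith [Real.arctan_lt_pi_div_two (1 / √ν)]

lemma aux_pt (ν s c : ℝ) (hν : 0 < ν) (hsc : s ^ 2 + c ^ 2 = 1) :
    ν / 2 * (ν ^ 2 * s ^ 2 / (ν + c ^ 2) ^ 3) + 1 / 4 * (ν / (ν + c ^ 2)) ^ 2 ≤
      |ν * s / (ν + c ^ 2)| + ν := by
  have hD : 0 < ν + c ^ 2 := by positivity
  obtain ⟨q, hq⟩ : ∃ q, q = ν / (ν + c ^ 2) := ⟨_, rfl⟩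
  have hq0 : 0 < q := hq ▸ by positivity
  have hq1 : q ≤ 1 := by rw [hq, div_le_one hD]; nlinarith
  have hqc : q * c ^ 2 ≤ ν := by
    have : q * (ν + c ^ 2) = ν := by rw [hq]; field_simp
    nlinarith
  have e1 : ν / 2 * (ν ^ 2 * s ^ 2 / (ν + c ^ 2) ^ 3) = q ^ 3 * s ^ 2 / 2 := by
    rw [hq]; field_simp
  have e2 : |ν * s / (ν + c ^ 2)| = q * |s| := by
    rw [show ν * s / (ν + c ^ 2) = q * s by rw [hq]; ring, abs_mul, abs_of_pos hq0]
  rw [e1, e2, ← hq]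
  have hs2 : s ^ 2 ≤ |s| := by
    have : |s| ≤ 1 := by rw [abs_le]; constructor <;> nlinarith
    nlinarith [sq_abs s, abs_nonneg s]
  have hqq : q ^ 2 ≤ q := by nlinarith
  have hq3 : q ^ 3 ≤ q := by nlinarith
  have a1 : q ^ 3 * s ^ 2 ≤ q * |s| :=
    mul_le_mul hq3 hs2 (sq_nonneg _) hq0.le
  have a2 : q * s ^ 2 ≤ q * |s| := mul_le_mul_of_nonneg_left hs2 hq0.le
  have a3 : q = q * s ^ 2 + q * c ^ 2 := by rw [← mul_add, hsc, mul_one]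
  have := mul_nonneg hq0.le (abs_nonneg s)
  linarith

/-- Proposition 5.1, low-energy data: there is an absolute constant
`C > 0` such that for every `ν ∈ (0,1]` there is a smooth `2π`-periodic mean-zero `h₀`
with `‖h₀'‖_∞ ≤ 1` and `E(h₀) ≤ C√ν`. -/
theorem stmt16 :
    ∃ C : ℝ, 0 < C ∧ ∀ ν : ℝ, ν ∈ Ioc (0 : ℝ) 1 →
      ∃ h₀ : ℝ → ℝ,
        ContDiff ℝ (⊤ : ℕ∞) h₀ ∧
        Function.Periodic h₀ (2 * Real.pi) ∧
        (∫ x in Icc (-Real.pi) Real.pi, h₀ x) = 0 ∧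
        (∀ x : ℝ, |deriv h₀ x| ≤ 1) ∧
        energy1D ν h₀ ≤ C * Real.sqrt ν := by
  refine ⟨4 * π, by positivity, fun ν hν => ?_⟩
  obtain ⟨hν, hν1⟩ := hν
  have hd1 : deriv (fun x => arcsin (sin x / √(1 + ν))) = fun x => cos x / √(ν + cos x ^ 2) :=
    funext fun x => (aux_d1 ν hν x).deriv
  have hd2 : deriv (fun x => cos x / √(ν + cos x ^ 2)) =
      fun x => -(ν * sin x) / √(ν + cos x ^ 2) ^ 3 :=
    funext fun x => (aux_d2 ν hν x).deriv
  have hpi := pi_pos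
  refine ⟨fun x => arcsin (sin x / √(1 + ν)), ?_, ?_, ?_, ?_, ?_⟩
  · rw [contDiff_iff_contDiffAt]
    intro x
    have hk : 0 < √(1 + ν) := Real.sqrt_pos.mpr (by linarith)
    have hlt : |sin x / √(1 + ν)| < 1 := by
      rw [abs_div, abs_of_pos hk, div_lt_one hk]
      refine lt_of_le_of_lt (abs_sin_le_one x) ?_
      rw [Real.lt_sqrt (by norm_num)]; linarith
    rw [abs_lt] at hlt
    have hA : ContDiffAt ℝ (⊤ : ℕ∞) arcsin (sin x / √(1 + ν)) :=
      Real.contDiffAt_arcsin (by linarith) (by linarith)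
    have hB : ContDiffAt ℝ (⊤ : ℕ∞) (fun x => sin x / √(1 + ν)) x :=
      Real.contDiff_sin.contDiffAt.div_const _
    have hC := ContDiffAt.comp (g := arcsin) (f := fun x => sin x / √(1 + ν)) x hA hB
    exact hC
  · intro x
    simp only [Real.sin_add_two_pi]
  · rw [integral_Icc_eq_integral_Ioc, ← intervalIntegral.integral_of_le (by linarith)]
    have h := intervalIntegral.integral_comp_neg (a := -π) (b := π)
      (fun x => arcsin (sin x / √(1 + ν)))
    simp only [sin_neg, neg_div, arcsin_neg, intervalIntegral.integral_neg, neg_neg] at h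
    linarith
  · intro x
    rw [hd1]
    have hu := Real.sqrt_pos.mpr (aux_pos ν hν x)
    simp only [abs_div, abs_of_pos hu]
    rw [div_le_one hu]
    exact Real.abs_le_sqrt (by linarith)
  · unfold energy1D
    rw [hd1, hd2, integral_Icc_eq_integral_Ioc, ← intervalIntegral.integral_of_le (by linarith)]
    have he : ∀ x, (ν / 2) * (-(ν * sin x) / √(ν + cos x ^ 2) ^ 3) ^ 2 +
        (1 / 4) * ((cos x / √(ν + cos x ^ 2)) ^ 2 - 1) ^ 2 =
        ν / 2 * (ν ^ 2 * sin x ^ 2 / (ν + cos x ^ 2) ^ 3) +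
          1 / 4 * (ν / (ν + cos x ^ 2)) ^ 2 := by
      intro x
      have hD := aux_pos ν hν x
      have hu2 : √(ν + cos x ^ 2) ^ 2 = ν + cos x ^ 2 := Real.sq_sqrt hD.le
      rw [div_pow, div_pow, ← pow_mul, show 3 * 2 = 2 * 3 by norm_num, pow_mul, hu2]
      have : cos x ^ 2 / (ν + cos x ^ 2) - 1 = -(ν / (ν + cos x ^ 2)) := by
        field_simp; ring
      rw [this]; ring
    simp only [he]
    have hne : ∀ x, ν + cos x ^ 2 ≠ 0 := fun x => (aux_pos ν hν x).ne'
    have hc : Continuous (fun x => |ν * sin x / (ν + cos x ^ 2)|) := by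
      fun_prop (disch := exact hne)
    have hc2 : Continuous (fun x => ν / 2 * (ν ^ 2 * sin x ^ 2 / (ν + cos x ^ 2) ^ 3) +
          1 / 4 * (ν / (ν + cos x ^ 2)) ^ 2) := by
      have h3 : ∀ x, (ν + cos x ^ 2) ^ 3 ≠ 0 := fun x => pow_ne_zero _ (hne x)
      fun_prop (disch := first | exact hne | exact h3)
    have hm := intervalIntegral.integral_mono (μ := volume) (a := -π) (b := π) (by linarith)
      (hc2.intervalIntegrable _ _) ((hc.add continuous_const).intervalIntegrable _ _)
      (fun x => aux_pt ν (sin x) (cos x) hν (Real.sin_sq_add_cos_sq x))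
    refine hm.trans ?_
    simp only [Pi.add_apply]
    rw [intervalIntegral.integral_add (hc.intervalIntegrable _ _) (by simp),
      intervalIntegral.integral_const, smul_eq_mul]
    have h1 := aux_int ν hν
    have h2 : ν ≤ √ν := Real.le_sqrt_of_sq_le (by nlinarith)
    nlinarith
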